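/- arXiv:1901.09839 — 3 statements merged into one kernel-verified Lean document; each statement's English description precedes it below -/
import Mathlib

section
/- Let n ≥ 2, let X be an n×p real matrix with columns x₁, …, xₚ, let C = Iₙ − (1/n)𝟙𝟙ᵀ be the centering matrix, and suppose the centered columns C x₁, …, C xₚ span the hyperplane {v ∈ ℝⁿ : Σᵢ vᵢ = 0}. If f₁, f₂ ∈ ℝⁿ satisfy cov(xⱼ, f₁) = cov(xⱼ, f₂) for every j = 1, …, p, then there exists a constant c ∈ ℝ such that f₁ = f₂ + c·𝟙. (Converse direction of the paper's Claim: under a spanning condition, two functions producing identical covariance effect size analogues differ by a constant shift.) -/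
open Finset Matrix

/-- Sample covariance of two vectors in ℝⁿ:
`cov(x, f) = (1/(n−1)) Σᵢ (xᵢ − x̄)(fᵢ − f̄)`. -/
noncomputable def sampleCov {n : ℕ} (x f : Fin n → ℝ) : ℝ :=
  (1 / ((n : ℝ) - 1)) *
    ∑ i, (x i - (∑ k, x k) / n) * (f i - (∑ k, f k) / n)

/-- The centering matrix `C = Iₙ − (1/n)𝟙𝟙ᵀ`. -/
noncomputable def centeringMatrix (n : ℕ) : Matrix (Fin n) (Fin n) ℝ :=
  1 - ((n : ℝ))⁻¹ • Matrix.of (fun _ _ => (1 : ℝ))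

/-- If the centered columns of `X` span the hyperplane `{v : Σᵢ vᵢ = 0}` and two
vectors `f₁, f₂` produce identical covariance effect size analogues, then
`f₁ = f₂ + c·𝟙` for some constant `c`. -/
theorem eq_add_const_of_sampleCov_eq (n p : ℕ) (hn : 2 ≤ n)
    (X : Matrix (Fin n) (Fin p) ℝ)
    (hspan : Submodule.span ℝ
        (Set.range fun j : Fin p => (centeringMatrix n).mulVec (fun i => X i j))
      = LinearMap.ker (∑ i : Fin n, (LinearMap.proj i : (Fin n → ℝ) →ₗ[ℝ] ℝ)))
    (f₁ f₂ : Fin n → ℝ)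
    (hcov : ∀ j : Fin p, sampleCov (fun i => X i j) f₁ = sampleCov (fun i => X i j) f₂) :
    ∃ c : ℝ, ∀ i, f₁ i = f₂ i + c := by
  have hn0 : (n : ℝ) ≠ 0 := by
    have : n ≠ 0 := by omega
    exact_mod_cast this
  have hn1 : (1 / ((n : ℝ) - 1)) ≠ 0 := by
    have h2 : (2 : ℝ) ≤ n := by exact_mod_cast hn
    have : (n : ℝ) - 1 ≠ 0 := by linarith
    exact one_div_ne_zero this
  set m₁ : ℝ := (∑ k, f₁ k) / n with hm₁
  set m₂ : ℝ := (∑ k, f₂ k) / n with hm₂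
  let g : Fin n → ℝ := fun i => (f₁ i - m₁) - (f₂ i - m₂)
  have hg0 : ∑ i, g i = 0 := by
    simp only [g, Finset.sum_sub_distrib, Finset.sum_const, Finset.card_univ, Fintype.card_fin,
      nsmul_eq_mul, hm₁, hm₂]
    field_simp
    ring
  have hcol : ∀ j, ∑ i, (centeringMatrix n).mulVec (fun i => X i j) i * g i = 0 := by
    intro j
    have h := mul_left_cancel₀ hn1 (hcov j)
    rw [← sub_eq_zero, ← Finset.sum_sub_distrib] at h
    rw [← h]
    refine Finset.sum_congr rfl fun i _ => ?_
    have hc : (centeringMatrix n).mulVec (fun i => X i j) i = X i j - (∑ k, X k j) / n := by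
      rw [centeringMatrix, Matrix.sub_mulVec, Matrix.one_mulVec, Matrix.smul_mulVec]
      simp [Matrix.mulVec, dotProduct, div_eq_inv_mul]
    rw [hc]
    simp only [g]
    ring
  have hall : ∀ v ∈ Submodule.span ℝ
      (Set.range fun j : Fin p => (centeringMatrix n).mulVec (fun i => X i j)),
      ∑ i, v i * g i = 0 := by
    intro v hv
    induction hv using Submodule.span_induction with
    | mem x hx =>
      obtain ⟨j, rfl⟩ := hx
      exact hcol j
    | zero => simp
    | add x y _ _ hx hy => simp [add_mul, Finset.sum_add_distrib, hx, hy]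
    | smul a x _ hx => simp [mul_assoc, ← Finset.mul_sum, hx]
  have hgg : ∑ i, g i * g i = 0 := by
    apply hall
    rw [hspan, LinearMap.mem_ker]
    simpa using hg0
  rw [Finset.sum_eq_zero_iff_of_nonneg (fun i _ => mul_self_nonneg _)] at hgg
  refine ⟨m₁ - m₂, fun i => ?_⟩
  have h : (f₁ i - m₁) - (f₂ i - m₂) = 0 := mul_self_eq_zero.mp (hgg i (Finset.mem_univ i))
  linarith
end

section
/- Let μ ∈ ℝᵖ, let Ω be a positive-definite symmetric p×p matrix with inverse Λ = Ω⁻¹, fix an index j, and use the partition notation where ωⱼ = Ωⱼⱼ, ω₋ⱼ is the j-th column of Ω with the j-th entry deleted, Ω₋ⱼ is Ω with the j-th row and column deleted, and λⱼ, λ₋ⱼ, Λ₋ⱼ are defined analogously from Λ; write μ = (μⱼ; μ₋ⱼ) and δⱼ = λ₋ⱼᵀ Λ₋ⱼ⁻¹ λ₋ⱼ. Then for every conditioning value b ∈ ℝ, the Kullback–Leibler divergence between the marginal density φ_{μ₋ⱼ, Ω₋ⱼ} and the conditional density φ_{μ₋ⱼ − Λ₋ⱼ⁻¹λ₋ⱼ(b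 − μⱼ), Λ₋ⱼ⁻¹} satisfies ∫_{ℝᵖ⁻¹} φ_{μ₋ⱼ,Ω₋ⱼ}(x) · log(φ_{μ₋ⱼ,Ω₋ⱼ}(x) / φ_{μ₋ⱼ−Λ₋ⱼ⁻¹λ₋ⱼ(b−μⱼ), Λ₋ⱼ⁻¹}(x)) dx = (1/2)·[tr(Ω₋ⱼΛ₋ⱼ) − log det(Ω₋ⱼΛ₋ⱼ) − (p−1) + δⱼ·(b − μⱼ)²]. (The paper's Equation (8), the closed-form KLD used in RATE; the KLD of the RATE criterion is this quantity at b = 0.) -/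
open MeasureTheory Matrix Real

/-- The multivariate Gaussian density with mean `μ` and covariance `S`:
`φ_{μ,S}(x) = (2π)^{−d/2} (det S)^{−1/2} exp(−(1/2)(x−μ)ᵀ S⁻¹ (x−μ))`. -/
noncomputable def mvnPDF {d : Type*} [Fintype d] [DecidableEq d] (μ : d → ℝ)
    (S : Matrix d d ℝ) (x : d → ℝ) : ℝ :=
  (2 * Real.pi) ^ (-(Fintype.card d : ℝ) / 2) * S.det ^ (-(1 : ℝ) / 2) *
    Real.exp (-(1 / 2) * ((x - μ) ⬝ᵥ S⁻¹.mulVec (x - μ)))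

open ProbabilityTheory in
lemma kr_int1 : Integrable (fun x : ℝ => gaussianPDFReal 0 1 x * x) := by
  have h := (memLp_id_gaussianReal (μ := 0) (v := 1) 1).integrable le_rfl
  rw [gaussianReal_of_var_ne_zero 0 one_ne_zero,
    integrable_withDensity_iff_integrable_smul' (measurable_gaussianPDF 0 1)
      (ae_of_all _ (by simp [gaussianPDF]))] at h
  simpa [gaussianPDF, gaussianPDFReal_nonneg] using h

open ProbabilityTheory in
lemma kr_int2 : Integrable (fun x : ℝ => gaussianPDFReal 0 1 x * x * x) := by
  have h := (memLp_id_gaussianReal (μ := 0) (v := 1) 2).integrable_sq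
  rw [gaussianReal_of_var_ne_zero 0 one_ne_zero,
    integrable_withDensity_iff_integrable_smul' (measurable_gaussianPDF 0 1)
      (ae_of_all _ (by simp [gaussianPDF]))] at h
  simpa [gaussianPDF, gaussianPDFReal_nonneg, pow_two, mul_assoc] using h

open ProbabilityTheory in
lemma kr_m1 : ∫ x : ℝ, gaussianPDFReal 0 1 x * x = 0 := by
  have h := integral_id_gaussianReal (μ := 0) (v := 1)
  rw [integral_gaussianReal_eq_integral_smul one_ne_zero] at h
  simpa using h

open ProbabilityTheory in
lemma kr_m2 : ∫ x : ℝ, gaussianPDFReal 0 1 x * x * x = 1 := by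
  have h := variance_fun_id_gaussianReal (μ := 0) (v := 1)
  rw [variance_eq_integral measurable_id'.aemeasurable] at h
  simp only [integral_id_gaussianReal] at h
  rw [integral_gaussianReal_eq_integral_smul one_ne_zero] at h
  simpa [pow_two, mul_assoc] using h

/-- standard Gaussian density on `d → ℝ` -/
noncomputable def krG {d : Type*} [Fintype d] (z : d → ℝ) : ℝ :=
  ∏ i, ProbabilityTheory.gaussianPDFReal 0 1 (z i)

section
open ProbabilityTheory
variable {d : Type*} [Fintype d] [DecidableEq d]

lemma krG_int0 : Integrable (fun z : d → ℝ => krG z) ∧ ∫ z : d → ℝ, krG z = 1 := by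
  constructor
  · exact Integrable.fintype_prod (f := fun _ : d => gaussianPDFReal 0 1)
      (fun _ => integrable_gaussianPDFReal 0 1)
  · unfold krG
    rw [integral_fintype_prod_volume_eq_prod (fun _ : d => gaussianPDFReal 0 1)]
    simp [integral_gaussianPDFReal_eq_one]

lemma krG_int1 (i : d) : Integrable (fun z : d → ℝ => krG z * z i) ∧
    ∫ z : d → ℝ, krG z * z i = 0 := by
  have e : (fun z : d → ℝ => krG z * z i) = fun z =>
      ∏ k, (fun k t => gaussianPDFReal 0 1 t * (if k = i then t else 1)) k (z k) := by
    funext z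
    simp only [Finset.prod_mul_distrib, Finset.prod_ite_eq', Finset.mem_univ, if_true, krG]
  rw [e]
  constructor
  · refine Integrable.fintype_prod (f := fun k t => gaussianPDFReal 0 1 t * (if k = i then t else 1)) ?_
    intro k
    by_cases h : k = i
    · simpa [h] using kr_int1
    · simpa [h] using integrable_gaussianPDFReal 0 1
  · rw [integral_fintype_prod_volume_eq_prod
      (fun k t => gaussianPDFReal 0 1 t * (if k = i then t else 1))]
    apply Finset.prod_eq_zero (Finset.mem_univ i)
    simpa using kr_m1

lemma krG_int2 (i j : d) : Integrable (fun z : d → ℝ => krG z * z i * z j) ∧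
    ∫ z : d → ℝ, krG z * z i * z j = if i = j then 1 else 0 := by
  have e : (fun z : d → ℝ => krG z * z i * z j) = fun z =>
      ∏ k, (fun k t => gaussianPDFReal 0 1 t * (if k = i then t else 1)
        * (if k = j then t else 1)) k (z k) := by
    funext z
    simp only [Finset.prod_mul_distrib, Finset.prod_ite_eq', Finset.mem_univ, if_true, krG]
  rw [e]
  constructor
  · refine Integrable.fintype_prod (f := fun k t => gaussianPDFReal 0 1 t * (if k = i then t else 1)
        * (if k = j then t else 1)) ?_
    intro k
    by_cases h : k = i <;> by_cases h' : k = j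
    · simp only [if_pos h, if_pos h']; exact kr_int2
    · simp only [if_pos h, if_neg h', mul_one]; exact kr_int1
    · simp only [if_neg h, if_pos h', mul_one]; exact kr_int1
    · simp only [if_neg h, if_neg h', mul_one]; exact integrable_gaussianPDFReal 0 1
  · rw [integral_fintype_prod_volume_eq_prod
      (fun k t => gaussianPDFReal 0 1 t * (if k = i then t else 1) * (if k = j then t else 1))]
    by_cases hij : i = j
    · subst hij
      rw [if_pos rfl]
      apply Finset.prod_eq_one
      intro k _
      by_cases h : k = i
      · simpa only [h, if_true] using kr_m2
      · simpa only [h, if_false, mul_one] using integral_gaussianPDFReal_eq_one 0 one_ne_zero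
    · rw [if_neg hij]
      apply Finset.prod_eq_zero (Finset.mem_univ i)
      simpa only [hij, if_true, if_false, mul_one] using kr_m1

lemma krG_quad (c : ℝ) (u : d → ℝ) (M : Matrix d d ℝ) :
    ∫ z : d → ℝ, krG z * (c + u ⬝ᵥ z + z ⬝ᵥ M.mulVec z) = c + M.trace := by
  have e : (fun z : d → ℝ => krG z * (c + u ⬝ᵥ z + z ⬝ᵥ M.mulVec z)) = fun z =>
      (c * krG z + ∑ i, u i * (krG z * z i)) + ∑ i, ∑ j, M i j * (krG z * z i * z j) := by
    funext z
    simp only [dotProduct, mulVec, mul_add, Finset.mul_sum]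
    congr 1
    · congr 1
      · ring
      · exact Finset.sum_congr rfl fun i _ => by ring
    · exact Finset.sum_congr rfl fun i _ => Finset.sum_congr rfl fun j _ => by ring
  have i0 : Integrable (fun z : d → ℝ => c * krG z) := krG_int0.1.const_mul c
  have i1 : ∀ i ∈ Finset.univ, Integrable (fun z : d → ℝ => u i * (krG z * z i)) :=
    fun i _ => (krG_int1 i).1.const_mul _
  have i2 : ∀ i j, Integrable (fun z : d → ℝ => M i j * (krG z * z i * z j)) :=
    fun i j => (krG_int2 i j).1.const_mul _
  have i2' : ∀ i ∈ Finset.univ, Integrable (fun z : d → ℝ => ∑ j, M i j * (krG z * z i * z j)) :=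
    fun i _ => integrable_finsetSum _ fun j _ => i2 i j
  have i01 : Integrable (fun z : d → ℝ => c * krG z + ∑ i, u i * (krG z * z i)) :=
    i0.add (integrable_finsetSum _ i1)
  rw [e, integral_add i01 (integrable_finsetSum _ i2'),
    integral_add i0 (integrable_finsetSum _ i1), integral_finsetSum _ i1,
    integral_finsetSum _ i2']
  simp_rw [integral_finsetSum _ (fun j _ => i2 _ j), integral_const_mul, (krG_int1 _).2,
    (krG_int2 _ _).2, krG_int0.2]
  simp [Matrix.trace]

lemma kr_cov (m : d → ℝ) (A : Matrix d d ℝ) (hA : A.det ≠ 0) (f : (d → ℝ) → ℝ) :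
    ∫ x, f x = ∫ z, |A.det| * f (m + A.mulVec z) := by
  have hinj : Function.Injective (Matrix.toLin' A) := by
    have := Matrix.mulVec_injective_iff_isUnit.2 ((Matrix.isUnit_iff_isUnit_det A).2 hA.isUnit)
    exact this
  have hemb : MeasurableEmbedding (Matrix.toLin' A) :=
    (LinearMap.continuous_of_finiteDimensional _).measurableEmbedding hinj
  have h := hemb.integral_map (μ := volume) (fun y => f (m + y))
  rw [Real.map_matrix_volume_pi_eq_smul_volume_pi hA, integral_smul_measure,
    integral_add_left_eq_self f m, ENNReal.toReal_ofReal (abs_nonneg _)] at h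
  rw [integral_const_mul]
  simp only [Matrix.toLin'_apply] at h
  rw [← h, abs_inv, smul_eq_mul, mul_inv_cancel_left₀ (abs_ne_zero.2 hA)]

lemma kr_log_mvn (m : d → ℝ) (S : Matrix d d ℝ) (hS : 0 < S.det) (x : d → ℝ) :
    0 < mvnPDF m S x ∧ Real.log (mvnPDF m S x) =
      (-(Fintype.card d : ℝ) / 2) * Real.log (2 * π) - 1 / 2 * Real.log S.det
        - 1 / 2 * ((x - m) ⬝ᵥ S⁻¹.mulVec (x - m)) := by
  have h1 : 0 < (2 * Real.pi) ^ (-(Fintype.card d : ℝ) / 2) := by positivity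
  have h2 : 0 < S.det ^ (-(1 : ℝ) / 2) := by positivity
  refine ⟨by unfold mvnPDF; positivity, ?_⟩
  unfold mvnPDF
  rw [Real.log_mul (by positivity) (by positivity), Real.log_mul h1.ne' h2.ne', Real.log_exp,
    Real.log_rpow (by positivity), Real.log_rpow hS]
  ring

lemma kr_general (m w : d → ℝ) (S T : Matrix d d ℝ) (hS : S.PosDef) (hT : T.PosDef) :
    ∫ x, mvnPDF m S x * Real.log (mvnPDF m S x / mvnPDF (m - w) T⁻¹ x) =
      (1 / 2) * ((S * T).trace - Real.log (S * T).det - (Fintype.card d : ℝ)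
        + w ⬝ᵥ T.mulVec w) := by
  obtain ⟨A, hSA⟩ : ∃ A : Matrix d d ℝ, S = A * Aᵀ := by
    open scoped MatrixOrder in
    obtain ⟨y, hy⟩ := CStarAlgebra.nonneg_iff_eq_star_mul_self.mp hS.posSemidef.nonneg
    exact ⟨yᵀ, by rw [hy]; simp [star_eq_conjTranspose]⟩
  have hSd := hS.det_pos
  have hTd := hT.det_pos
  have hSdA : S.det = A.det ^ 2 := by rw [hSA, det_mul, det_transpose]; ring
  have hA : A.det ≠ 0 := by
    intro h
    rw [hSdA, h] at hSd
    simp at hSd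
  have hAu : IsUnit A.det := hA.isUnit
  have hTi : 0 < (T⁻¹).det := hT.inv.det_pos
  have hTT : T⁻¹⁻¹ = T := nonsing_inv_nonsing_inv T hTd.ne'.isUnit
  have hTs : Tᵀ = T := by simpa [IsHermitian] using hT.isHermitian
  have hq : ∀ z : d → ℝ, A.mulVec z ⬝ᵥ S⁻¹.mulVec (A.mulVec z) = z ⬝ᵥ z := by
    intro z
    have : S⁻¹ * A = (Aᵀ)⁻¹ := by
      rw [hSA, Matrix.mul_inv_rev, Matrix.mul_assoc, nonsing_inv_mul _ hAu, Matrix.mul_one]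
    rw [mulVec_mulVec, this, dotProduct_mulVec, ← mulVec_transpose, mulVec_mulVec,
      ← transpose_nonsing_inv, transpose_transpose, nonsing_inv_mul _ hAu, one_mulVec]
  have key : ∀ z : d → ℝ, |A.det| * mvnPDF m S (m + A.mulVec z) = krG z := by
    intro z
    have hdet : S.det ^ (-(1 : ℝ) / 2) = |A.det|⁻¹ := by
      rw [hSdA, ← sq_abs, ← Real.rpow_natCast, ← Real.rpow_mul (abs_nonneg _)]
      norm_num
      rw [Real.rpow_neg_one]
    have hpi : (2 * Real.pi) ^ (-(Fintype.card d : ℝ) / 2)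
        = ((√(2 * π))⁻¹) ^ (Fintype.card d) := by
      rw [Real.sqrt_eq_rpow, ← Real.rpow_neg (by positivity), ← Real.rpow_natCast,
        ← Real.rpow_mul (by positivity)]
      congr 1
      ring
    unfold mvnPDF krG gaussianPDFReal
    rw [add_sub_cancel_left, hq, hdet, hpi, Finset.prod_mul_distrib, ← Real.exp_sum]
    have : ∑ i, -(z i - 0) ^ 2 / (2 * ((1 : NNReal) : ℝ)) = -(1 / 2) * (z ⬝ᵥ z) := by
      simp only [dotProduct, Finset.mul_sum]
      exact Finset.sum_congr rfl fun i _ => by simp; ring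
    rw [this]
    have := abs_ne_zero.2 hA
    simp
    field_simp
  rw [kr_cov m A hA]
  have e : ∀ z : d → ℝ, |A.det| * (mvnPDF m S (m + A.mulVec z) *
      Real.log (mvnPDF m S (m + A.mulVec z) / mvnPDF (m - w) T⁻¹ (m + A.mulVec z))) =
      krG z * ((1 / 2 * (- Real.log (S * T).det + w ⬝ᵥ T.mulVec w)) +
        (Aᵀ.mulVec (T.mulVec w)) ⬝ᵥ z
        + z ⬝ᵥ ((1 / 2 : ℝ) • (Aᵀ * T * A - 1)).mulVec z) := by
    intro z
    obtain ⟨p1, l1⟩ := kr_log_mvn m S hSd (m + A.mulVec z)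
    obtain ⟨p2, l2⟩ := kr_log_mvn (m - w) T⁻¹ hTi (m + A.mulVec z)
    rw [← mul_assoc, key, Real.log_div p1.ne' p2.ne', l1, l2, hTT, add_sub_cancel_left, hq,
      show m + A.mulVec z - (m - w) = A.mulVec z + w by abel]
    rw [det_mul, Real.log_mul hSd.ne' hTd.ne', det_nonsing_inv, Ring.inverse_eq_inv', Real.log_inv]
    have a1 : A.mulVec z ⬝ᵥ T.mulVec (A.mulVec z) = z ⬝ᵥ (Aᵀ * T * A).mulVec z := by
      rw [← mulVec_mulVec, ← mulVec_mulVec, dotProduct_mulVec z, vecMul_transpose]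
    have a2 : w ⬝ᵥ T.mulVec (A.mulVec z) = (Aᵀ.mulVec (T.mulVec w)) ⬝ᵥ z := by
      rw [mulVec_transpose, ← dotProduct_mulVec, dotProduct_mulVec w, ← mulVec_transpose, hTs]
    have a3 : A.mulVec z ⬝ᵥ T.mulVec w = (Aᵀ.mulVec (T.mulVec w)) ⬝ᵥ z := by
      rw [mulVec_transpose, ← dotProduct_mulVec, dotProduct_comm]
    simp only [mulVec_add, dotProduct_add, add_dotProduct, smul_mulVec, sub_mulVec,
      dotProduct_smul, dotProduct_sub, one_mulVec, a1, a2, a3, smul_eq_mul]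
    ring
  simp_rw [e]
  rw [krG_quad, trace_smul, trace_sub, trace_one, hSA,
    Matrix.mul_assoc A, trace_mul_comm A, ← Matrix.mul_assoc, smul_eq_mul]
  ring
end

/-- The paper's Equation (8): the closed-form KLD used in RATE. For a Gaussian
vector with mean `μ` and covariance `Ω` (precision `Λ = Ω⁻¹`), the KL divergence
between the marginal density of the coordinates other than `j` and the
conditional density given that the `j`-th coordinate equals `b` is
`(1/2)[tr(Ω₋ⱼΛ₋ⱼ) − log det(Ω₋ⱼΛ₋ⱼ) − (p−1) + δⱼ(b−μⱼ)²]`,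
with `δⱼ = λ₋ⱼᵀ Λ₋ⱼ⁻¹ λ₋ⱼ`. -/
theorem kld_rate_closed_form (p : ℕ) (μ : Fin (p + 1) → ℝ)
    (Ω Λ : Matrix (Fin (p + 1)) (Fin (p + 1)) ℝ)
    (hsymm : Ω.IsSymm) (hΩ : Ω.PosDef) (hΛ : Λ = Ω⁻¹) (j : Fin (p + 1)) (b : ℝ) :
    ∫ x : Fin p → ℝ,
        mvnPDF (μ ∘ j.succAbove) (Ω.submatrix j.succAbove j.succAbove) x *
          Real.log
            (mvnPDF (μ ∘ j.succAbove) (Ω.submatrix j.succAbove j.succAbove) x /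
              mvnPDF
                ((μ ∘ j.succAbove) -
                  (b - μ j) • ((Λ.submatrix j.succAbove j.succAbove)⁻¹.mulVec
                    (fun i => Λ (j.succAbove i) j)))
                (Λ.submatrix j.succAbove j.succAbove)⁻¹ x) =
      (1 / 2) *
        ((Ω.submatrix j.succAbove j.succAbove * Λ.submatrix j.succAbove j.succAbove).trace
          - Real.log (Ω.submatrix j.succAbove j.succAbove *
              Λ.submatrix j.succAbove j.succAbove).det
          - ((Fintype.card (Fin (p + 1)) : ℝ) - 1)
          + ((fun i => Λ (j.succAbove i) j) ⬝ᵥ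
              (Λ.submatrix j.succAbove j.succAbove)⁻¹.mulVec
                (fun i => Λ (j.succAbove i) j)) * (b - μ j) ^ 2) := by
  have hΛp : Λ.PosDef := hΛ ▸ hΩ.inv
  have hinj := Fin.succAbove_right_injective (p := j)
  have hS := hΩ.submatrix hinj
  have hT := hΛp.submatrix hinj
  rw [kr_general _ _ _ _ hS hT]
  have hu : IsUnit (Λ.submatrix j.succAbove j.succAbove).det := hT.det_pos.ne'.isUnit
  rw [mulVec_smul, mulVec_mulVec, mul_nonsing_inv _ hu, one_mulVec, smul_dotProduct,
    dotProduct_smul, dotProduct_comm _ (fun i => Λ (j.succAbove i) j)]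
  simp only [Fintype.card_fin, smul_eq_mul]
  push_cast
  ring
end

section
/- Let Ω be a positive-definite symmetric p×p matrix with inverse Λ = Ω⁻¹, fix an index j, and use the partition notation ωⱼ, ω₋ⱼ, Ω₋ⱼ, λⱼ, λ₋ⱼ, Λ₋ⱼ; write δⱼ = λ₋ⱼᵀ Λ₋ⱼ⁻¹ λ₋ⱼ and fix μⱼ, b ∈ ℝ. Then the closed-form KLD value (1/2)·[tr(Ω₋ⱼΛ₋ⱼ) − log det(Ω₋ⱼΛ₋ⱼ) − (p−1) + δⱼ·(b − μⱼ)²] is nonnegative, and it equals zero for every b if and only if ω₋ⱼ = 0. (The paper's assertion that KLD(β̃ⱼ) is a nonnegative quantity which is zero exactly when removing the effect of variable j has no influence on the other variables.) -/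
open Matrix Real

/-- The closed-form RATE KLD value
`(1/2)[tr(Ω₋ⱼΛ₋ⱼ) − log det(Ω₋ⱼΛ₋ⱼ) − (p−1) + δⱼ(b−μⱼ)²]`, with `Λ = Ω⁻¹` and
`δⱼ = λ₋ⱼᵀ Λ₋ⱼ⁻¹ λ₋ⱼ`, is nonnegative; and it vanishes for every conditioning
value `b` if and only if `ω₋ⱼ = 0`. -/
theorem kld_nonneg_and_zero_iff (p : ℕ)
    (Ω Λ : Matrix (Fin (p + 1)) (Fin (p + 1)) ℝ)
    (hsymm : Ω.IsSymm) (hΩ : Ω.PosDef) (hΛ : Λ = Ω⁻¹)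
    (j : Fin (p + 1)) (μj b : ℝ) :
    0 ≤ (1 / 2) *
        ((Ω.submatrix j.succAbove j.succAbove * Λ.submatrix j.succAbove j.succAbove).trace
          - Real.log (Ω.submatrix j.succAbove j.succAbove *
              Λ.submatrix j.succAbove j.succAbove).det
          - ((Fintype.card (Fin (p + 1)) : ℝ) - 1)
          + ((fun i => Λ (j.succAbove i) j) ⬝ᵥ
              (Λ.submatrix j.succAbove j.succAbove)⁻¹.mulVec
                (fun i => Λ (j.succAbove i) j)) * (b - μj) ^ 2) ∧
      ((∀ b' : ℝ, (1 / 2) *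
          ((Ω.submatrix j.succAbove j.succAbove * Λ.submatrix j.succAbove j.succAbove).trace
            - Real.log (Ω.submatrix j.succAbove j.succAbove *
                Λ.submatrix j.succAbove j.succAbove).det
            - ((Fintype.card (Fin (p + 1)) : ℝ) - 1)
            + ((fun i => Λ (j.succAbove i) j) ⬝ᵥ
                (Λ.submatrix j.succAbove j.succAbove)⁻¹.mulVec
                  (fun i => Λ (j.succAbove i) j)) * (b' - μj) ^ 2) = 0) ↔
        (fun i => Ω (j.succAbove i) j) = (0 : Fin p → ℝ)) := by
  have hΛp : Λ.PosDef := hΛ ▸ hΩ.inv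
  have hdet : IsUnit Ω.det := (Matrix.isUnit_iff_isUnit_det _).1 hΩ.isUnit
  have hmul : Ω * Λ = 1 := by rw [hΛ]; exact Matrix.mul_nonsing_inv _ hdet
  have hΛs : ∀ i k, Λ i k = Λ k i := fun i k => by
    have := hΛp.isHermitian.apply k i
    simpa using this
  have hA : (Ω.submatrix j.succAbove j.succAbove).PosDef :=
    hΩ.submatrix Fin.succAbove_right_injective
  have hM : (Λ.submatrix j.succAbove j.succAbove).PosDef :=
    hΛp.submatrix Fin.succAbove_right_injective
  have hjj : 0 < Λ j j := hΛp.diag_pos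
  have hAM : Ω.submatrix j.succAbove j.succAbove * Λ.submatrix j.succAbove j.succAbove
      = 1 - Matrix.vecMulVec (fun i => Ω (j.succAbove i) j) (fun i => Λ (j.succAbove i) j) := by
    ext i k
    have h := congrFun (congrFun hmul (j.succAbove i)) (j.succAbove k)
    rw [Matrix.mul_apply, Fin.sum_univ_succAbove _ j] at h
    simp only [Matrix.mul_apply, Matrix.submatrix_apply, Matrix.sub_apply, Matrix.vecMulVec_apply]
    rw [hΛs (j.succAbove k) j]
    have h1 : (1 : Matrix (Fin (p + 1)) (Fin (p + 1)) ℝ) (j.succAbove i) (j.succAbove k)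
        = (1 : Matrix (Fin p) (Fin p) ℝ) i k := by
      simp [Matrix.one_apply]
    rw [h1] at h
    linarith
  have hcol : ∀ i, Ω (j.succAbove i) j * Λ j j
      + ((Ω.submatrix j.succAbove j.succAbove) *ᵥ (fun i => Λ (j.succAbove i) j)) i = 0 := by
    intro i
    have h := congrFun (congrFun hmul (j.succAbove i)) j
    rw [Matrix.mul_apply, Fin.sum_univ_succAbove _ j] at h
    rw [Matrix.one_apply_ne (Fin.succAbove_ne j i)] at h
    simpa [Matrix.mulVec, dotProduct] using h
  have hcard : ((Fintype.card (Fin (p + 1)) : ℝ) - 1) = p := by simp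
  have hdetpos := mul_pos hA.det_pos hM.det_pos
  rw [← Matrix.det_mul] at hdetpos
  have hiff : (fun i => Ω (j.succAbove i) j) = (0 : Fin p → ℝ) ↔
      (fun i => Λ (j.succAbove i) j) = (0 : Fin p → ℝ) := by
    constructor
    · intro h0
      have h2 : (Ω.submatrix j.succAbove j.succAbove) *ᵥ (fun i => Λ (j.succAbove i) j) = 0 := by
        ext i
        have h3 := hcol i
        have h4 : Ω (j.succAbove i) j = 0 := congrFun h0 i
        rw [h4] at h3
        simpa using h3
      exact Matrix.eq_zero_of_mulVec_eq_zero hA.det_pos.ne' h2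
    · intro h0
      ext i
      have h3 := hcol i
      rw [h0] at h3
      simpa [hjj.ne'] using h3
  rw [hcard]
  generalize hl : (fun i => Λ (j.succAbove i) j) = l at *
  generalize hw : (fun i => Ω (j.succAbove i) j) = w at *
  generalize Λ.submatrix j.succAbove j.succAbove = M at *
  generalize Ω.submatrix j.succAbove j.succAbove = A at *
  rw [hAM] at hdetpos ⊢
  have hd : (1 - Matrix.vecMulVec w l).det = 1 - l ⬝ᵥ w := by
    rw [Matrix.vecMulVec_eq Unit, sub_eq_add_neg, ← Matrix.neg_mul, Matrix.det_one_add_mul_comm]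
    simp [Matrix.det_unique, Matrix.mul_apply, dotProduct, sub_eq_add_neg]
  have ht : (1 - Matrix.vecMulVec w l).trace = p - l ⬝ᵥ w := by
    simp [Matrix.trace_sub, Matrix.trace_vecMulVec, dotProduct_comm]
  rw [hd] at hdetpos ⊢
  rw [ht]
  have hlog := Real.log_le_sub_one_of_pos hdetpos
  have hq : 0 ≤ l ⬝ᵥ M⁻¹ *ᵥ l := by
    simpa using hM.inv.posSemidef.dotProduct_mulVec_nonneg l
  refine ⟨?_, ?_⟩
  · have := mul_nonneg hq (sq_nonneg (b - μj))
    linarith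
  · rw [hiff]
    constructor
    · intro h
      have h0 := h μj
      have h1 := h (μj + 1)
      by_contra hne
      have h2 : 0 < l ⬝ᵥ M⁻¹ *ᵥ l := by
        simpa using hM.inv.dotProduct_mulVec_pos hne
      ring_nf at h0 h1
      linarith
    · intro h b'
      simp [h]
end
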